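/- arXiv:2605.17167 — 2 statements merged into one kernel-verified Lean document; each statement's English description precedes it below -/
import Mathlib

section
/- Let ρ and σ be n×n positive definite complex density matrices and t ∈ [0,1]. Then the operator identity ρ ♮_t σ = σ ♮_{1-t} ρ holds, where ♮_t denotes the weighted spectral mean. -/
/-!
For positive definite `ρ`, `σ` the matrix `X = ρ⁻¹ ♯ σ` is the unique positive definite solution of
the Riccati equation `X ρ X = σ` (`msharp_inv_mul_mul`, `msharp_inv_unique`).  Multiplying by
`X⁻¹` on both sides shows that `X⁻¹` solves the equation with `ρ` and `σ` exchanged, so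
`σ⁻¹ ♯ ρ = X⁻¹`, and hence
`σ ♮_{1-t} ρ = X^{t-1} σ X^{t-1} = X^{t-1} (X ρ X) X^{t-1} = X^t ρ X^t = ρ ♮_t σ`.
The laws of exponents for `mpow` are inherited from Mathlib's continuous functional calculus.
-/

open Matrix
open scoped ComplexOrder

/-- Real power of a matrix by functional calculus on the eigenvalues
(junk value `0` if the matrix is not Hermitian).  Since eigenvalue powers
are real powers (`Real.rpow`) of real numbers, the conventions `0 ^ 0 = 1`
and `0 ^ s = 0` for `s > 0` hold on positive semidefinite matrices. -/
noncomputable def mpow {n : Type*} [Fintype n] [DecidableEq n]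
    (A : Matrix n n ℂ) (r : ℝ) : Matrix n n ℂ :=
  if hA : A.IsHermitian then
    (hA.eigenvectorUnitary : Matrix n n ℂ) *
      Matrix.diagonal (fun i => ((hA.eigenvalues i ^ r : ℝ) : ℂ)) *
      (star (hA.eigenvectorUnitary : Matrix n n ℂ))
  else 0

/-- The matrix geometric mean `A ♯ B = A^{1/2} (A^{-1/2} B A^{-1/2})^{1/2} A^{1/2}`. -/
noncomputable def msharp {n : Type*} [Fintype n] [DecidableEq n]
    (A B : Matrix n n ℂ) : Matrix n n ℂ :=
  mpow A (1/2) * mpow (mpow A (-(1/2)) * B * mpow A (-(1/2))) (1/2) * mpow A (1/2)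

/-- The weighted spectral fidelity `F_t^spec(ρ,σ) = Tr(ρ (ρ⁻¹ ♯ σ)^{2t})`. -/
noncomputable def specFid {n : Type*} [Fintype n] [DecidableEq n]
    (t : ℝ) (ρ σ : Matrix n n ℂ) : ℂ :=
  Matrix.trace (ρ * mpow (msharp ρ⁻¹ σ) (2 * t))

/-- The weighted spectral mean `A ♮_t B = (A⁻¹ ♯ B)^t A (A⁻¹ ♯ B)^t`. -/
noncomputable def mnat {n : Type*} [Fintype n] [DecidableEq n]
    (t : ℝ) (A B : Matrix n n ℂ) : Matrix n n ℂ :=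
  mpow (msharp A⁻¹ B) t * A * mpow (msharp A⁻¹ B) t

section Helpers

variable {n : Type*} [Fintype n] [DecidableEq n]

lemma mpow_eq_cfc {A : Matrix n n ℂ} (hA : A.IsHermitian) (r : ℝ) :
    mpow A r = cfc (fun x : ℝ => x ^ r) A := by
  rw [hA.cfc_eq, mpow, dif_pos hA, Matrix.IsHermitian.cfc, Unitary.conjStarAlgAut_apply]
  rfl

/-- The spectrum of a matrix is finite, so every function is continuous on it. -/
lemma continuousOn_real_spectrum {A : Matrix n n ℂ} (hA : A.IsHermitian) (f : ℝ → ℝ) :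
    ContinuousOn f (spectrum ℝ A) := by
  refine Set.Finite.continuousOn ?_ f
  rw [hA.spectrum_real_eq_range_eigenvalues]
  exact Set.finite_range _

lemma pos_of_mem_real_spectrum {A : Matrix n n ℂ} (hA : A.PosDef) {x : ℝ}
    (hx : x ∈ spectrum ℝ A) : 0 < x := by
  rw [hA.isHermitian.spectrum_real_eq_range_eigenvalues] at hx
  obtain ⟨i, rfl⟩ := hx
  exact hA.eigenvalues_pos i

lemma mpow_posDef {A : Matrix n n ℂ} (hA : A.PosDef) (r : ℝ) : (mpow A r).PosDef := by
  rw [mpow, dif_pos hA.isHermitian]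
  refine (Matrix.IsUnit.posDef_star_right_conjugate_iff
    (Unitary.isUnit_coe (U := hA.isHermitian.eigenvectorUnitary))).2 ?_
  refine Matrix.PosDef.diagonal fun i => ?_
  exact_mod_cast Real.rpow_pos_of_pos (hA.eigenvalues_pos i) r

lemma mpow_mul {A : Matrix n n ℂ} (hA : A.PosDef) (r s : ℝ) :
    mpow A r * mpow A s = mpow A (r + s) := by
  have h := hA.isHermitian
  rw [mpow_eq_cfc h, mpow_eq_cfc h, mpow_eq_cfc h,
    ← cfc_mul _ _ A (continuousOn_real_spectrum h _) (continuousOn_real_spectrum h _)]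
  exact cfc_congr fun x hx => (Real.rpow_add (pos_of_mem_real_spectrum hA hx) r s).symm

lemma mpow_one {A : Matrix n n ℂ} (hA : A.PosDef) : mpow A 1 = A := by
  have h : IsSelfAdjoint A := hA.isHermitian
  rw [mpow_eq_cfc hA.isHermitian]
  simp only [Real.rpow_one]
  exact cfc_id' ℝ A

lemma mpow_zero {A : Matrix n n ℂ} (hA : A.PosDef) : mpow A 0 = 1 := by
  have h : IsSelfAdjoint A := hA.isHermitian
  rw [mpow_eq_cfc hA.isHermitian]
  simp only [Real.rpow_zero]
  exact cfc_const_one ℝ A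

lemma mpow_mpow {A : Matrix n n ℂ} (hA : A.PosDef) (r s : ℝ) :
    mpow (mpow A r) s = mpow A (r * s) := by
  have h := hA.isHermitian
  have h' : IsSelfAdjoint A := h
  have hfin : (spectrum ℝ A).Finite := by
    rw [h.spectrum_real_eq_range_eigenvalues]
    exact Set.finite_range _
  rw [mpow_eq_cfc (mpow_posDef hA r).isHermitian, mpow_eq_cfc h, mpow_eq_cfc h,
    ← cfc_comp (fun x : ℝ => x ^ s) (fun x : ℝ => x ^ r) A h'
      ((hfin.image _).continuousOn _) (continuousOn_real_spectrum h _)]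
  exact cfc_congr fun x hx => (Real.rpow_mul (pos_of_mem_real_spectrum hA hx).le r s).symm

lemma mpow_mul_mpow_neg {A : Matrix n n ℂ} (hA : A.PosDef) (r : ℝ) :
    mpow A r * mpow A (-r) = 1 := by
  rw [mpow_mul hA, add_neg_cancel, mpow_zero hA]

lemma mpow_neg_mul_mpow {A : Matrix n n ℂ} (hA : A.PosDef) (r : ℝ) :
    mpow A (-r) * mpow A r = 1 := by
  rw [mpow_mul hA, neg_add_cancel, mpow_zero hA]

lemma mpow_half_mul_self {A : Matrix n n ℂ} (hA : A.PosDef) :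
    mpow A (1 / 2) * mpow A (1 / 2) = A := by
  rw [mpow_mul hA, add_halves, mpow_one hA]

lemma inv_eq_mpow {A : Matrix n n ℂ} (hA : A.PosDef) : A⁻¹ = mpow A (-1) := by
  refine Matrix.inv_eq_right_inv ?_
  have h := mpow_mul_mpow_neg hA 1
  rwa [mpow_one hA] at h

/-- Uniqueness of the positive definite square root. -/
lemma mpow_half_of_mul_self {A : Matrix n n ℂ} (hA : A.PosDef) : mpow (A * A) (1 / 2) = A := by
  have h : A * A = mpow A 2 := by
    have h2 := mpow_mul hA 1 1
    rwa [mpow_one hA, one_add_one_eq_two] at h2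
  rw [h, mpow_mpow hA, mul_one_div_cancel two_ne_zero, mpow_one hA]

lemma conj_posDef {A R : Matrix n n ℂ} (hA : A.PosDef) (hR : R.PosDef) : (R * A * R).PosDef := by
  have h := (Matrix.IsUnit.posDef_star_right_conjugate_iff (x := A) hR.isUnit).2 hA
  rwa [Matrix.star_eq_conjTranspose, hR.isHermitian.eq] at h

lemma msharp_inv {A : Matrix n n ℂ} (hA : A.PosDef) (B : Matrix n n ℂ) :
    msharp A⁻¹ B = mpow A (-(1 / 2)) * mpow (mpow A (1 / 2) * B * mpow A (1 / 2)) (1 / 2) *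
      mpow A (-(1 / 2)) := by
  rw [msharp, inv_eq_mpow hA, mpow_mpow hA, mpow_mpow hA, neg_one_mul, neg_one_mul, neg_neg]

lemma msharp_inv_posDef {A B : Matrix n n ℂ} (hA : A.PosDef) (hB : B.PosDef) :
    (msharp A⁻¹ B).PosDef := by
  rw [msharp_inv hA]
  exact conj_posDef (mpow_posDef (conj_posDef hB (mpow_posDef hA _)) _) (mpow_posDef hA _)

/-- A positive definite solution `Z` of the Riccati equation `Z A Z = B` equals `A⁻¹ ♯ B`:
`A^{1/2} Z A^{1/2}` is a positive definite square root of `A^{1/2} B A^{1/2}`. -/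
lemma msharp_inv_unique {A B Z : Matrix n n ℂ} (hA : A.PosDef) (hZ : Z.PosDef)
    (h : Z * A * Z = B) : msharp A⁻¹ B = Z := by
  have hsq : mpow A (1 / 2) * B * mpow A (1 / 2) =
      (mpow A (1 / 2) * Z * mpow A (1 / 2)) * (mpow A (1 / 2) * Z * mpow A (1 / 2)) := by
    calc mpow A (1 / 2) * B * mpow A (1 / 2)
        = mpow A (1 / 2) * Z * (mpow A (1 / 2) * mpow A (1 / 2)) * Z * mpow A (1 / 2) := by
          rw [mpow_half_mul_self hA, ← h]; noncomm_ring
      _ = _ := by noncomm_ring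
  rw [msharp_inv hA, hsq, mpow_half_of_mul_self (conj_posDef hZ (mpow_posDef hA _))]
  calc _ = (mpow A (-(1 / 2)) * mpow A (1 / 2)) * Z * (mpow A (1 / 2) * mpow A (-(1 / 2))) := by
          noncomm_ring
    _ = Z := by rw [mpow_neg_mul_mpow hA, mpow_mul_mpow_neg hA, one_mul, mul_one]

/-- `X = A⁻¹ ♯ B` solves the Riccati equation `X A X = B`. -/
lemma msharp_inv_mul_mul {A B : Matrix n n ℂ} (hA : A.PosDef) (hB : B.PosDef) :
    msharp A⁻¹ B * A * msharp A⁻¹ B = B := by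
  have hC := conj_posDef hB (mpow_posDef hA (1 / 2))
  rw [msharp_inv hA]
  set M := mpow (mpow A (1 / 2) * B * mpow A (1 / 2)) (1 / 2) with hM
  have hMM : M * M = mpow A (1 / 2) * B * mpow A (1 / 2) := mpow_half_mul_self hC
  have hmid : mpow A (-(1 / 2)) * A * mpow A (-(1 / 2)) = 1 := by
    nth_rewrite 2 [← mpow_half_mul_self hA]
    rw [← mul_assoc, mpow_neg_mul_mpow hA, one_mul, mpow_mul_mpow_neg hA]
  calc _ = mpow A (-(1 / 2)) * M * (mpow A (-(1 / 2)) * A * mpow A (-(1 / 2))) * M *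
          mpow A (-(1 / 2)) := by simp only [mul_assoc]
    _ = mpow A (-(1 / 2)) * (M * M) * mpow A (-(1 / 2)) := by
        rw [hmid, mul_one]; simp only [mul_assoc]
    _ = (mpow A (-(1 / 2)) * mpow A (1 / 2)) * B * (mpow A (1 / 2) * mpow A (-(1 / 2))) := by
        rw [hMM]; simp only [mul_assoc]
    _ = B := by rw [mpow_neg_mul_mpow hA, mpow_mul_mpow_neg hA, one_mul, mul_one]

end Helpers

/-- Flip symmetry of the weighted spectral mean: `ρ ♮_t σ = σ ♮_{1-t} ρ`. -/
theorem mnat_flip {n : Type*} [Fintype n] [DecidableEq n]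
    (ρ σ : Matrix n n ℂ) (hρ : ρ.PosDef) (hσ : σ.PosDef)
    (hρ1 : ρ.trace = 1) (hσ1 : σ.trace = 1)
    (t : ℝ) (ht : t ∈ Set.Icc (0 : ℝ) 1) :
    mnat t ρ σ = mnat (1 - t) σ ρ := by
  have hX := msharp_inv_posDef hρ hσ
  have hR := msharp_inv_mul_mul hρ hσ
  rw [mnat, mnat]
  set X := msharp ρ⁻¹ σ with hXdef
  have hl : mpow X (-1) * X = 1 := by
    have h := mpow_neg_mul_mpow hX 1
    rwa [mpow_one hX] at h
  have hr : X * mpow X (-1) = 1 := by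
    have h := mpow_mul_mpow_neg hX 1
    rwa [mpow_one hX] at h
  have hY : msharp σ⁻¹ ρ = mpow X (-1) := by
    refine msharp_inv_unique hσ (mpow_posDef hX _) ?_
    calc mpow X (-1) * σ * mpow X (-1)
        = (mpow X (-1) * X) * ρ * (X * mpow X (-1)) := by
          rw [← hR]; simp only [mul_assoc]
      _ = ρ := by rw [hl, hr, one_mul, mul_one]
  have e1 : mpow X (t - 1) * X = mpow X t := by
    have h := mpow_mul hX (t - 1) 1
    rwa [mpow_one hX, sub_add_cancel] at h
  have e2 : X * mpow X (t - 1) = mpow X t := by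
    have h := mpow_mul hX 1 (t - 1)
    rwa [mpow_one hX, add_sub_cancel] at h
  rw [hY, mpow_mpow hX, show (-1 : ℝ) * (1 - t) = t - 1 by ring]
  calc mpow X t * ρ * mpow X t = (mpow X (t - 1) * X) * ρ * (X * mpow X (t - 1)) := by rw [e1, e2]
    _ = mpow X (t - 1) * (X * ρ * X) * mpow X (t - 1) := by simp only [mul_assoc]
    _ = mpow X (t - 1) * σ * mpow X (t - 1) := by rw [hR]
end

section
/- Let ρ, σ be n×n positive definite complex density matrices, let τ be an m×m positive definite complex density matrix, and let t ∈ [0,1]. Then F_t^spec(ρ ⊗ τ, σ ⊗ τ) = F_t^spec(ρ,σ), where ⊗ denotes the Kronecker (tensor) product. -/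
/-!
Real powers commute with Kronecker products of positive semidefinite matrices: if
`A = U diag(a) U*` and `B = V diag(b) V*`, then `A ⊗ B = (U ⊗ V) diag(a ⊗ b) (U ⊗ V)*`, and
`(a b) ^ r = a ^ r b ^ r` for nonnegative `a`, `b`. This uses that the power of a matrix may be
computed from any unitary diagonalization (`mpow_unitaryDiag`), not only from the chosen one.
Hence `(ρ ⊗ τ)⁻¹ ♯ (σ ⊗ τ) = (ρ⁻¹ ♯ σ) ⊗ (τ⁻¹ ♯ τ)`, and `τ⁻¹ ♯ τ = 1` because everything commutes.
The trace is multiplicative on Kronecker products, so the fidelity is multiplied by `Tr τ = 1`.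
-/

open Matrix
open scoped ComplexOrder

open Kronecker

/-- The matrix `U diag(d) U*`. -/
noncomputable def unitaryDiag {n : Type*} [Fintype n] [DecidableEq n]
    (U : Matrix n n ℂ) (d : n → ℝ) : Matrix n n ℂ :=
  U * Matrix.diagonal (fun i => (d i : ℂ)) * star U

section
variable {n m : Type*} [Fintype n] [DecidableEq n] [Fintype m] [DecidableEq m]

lemma unitaryDiag_isHermitian (U : Matrix n n ℂ) (d : n → ℝ) :
    (unitaryDiag U d).IsHermitian := by
  have h : (Matrix.diagonal (fun i => (d i : ℂ))).IsHermitian := by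
    rw [Matrix.isHermitian_diagonal_iff]
    intro i
    simp [isSelfAdjoint_iff]
  exact Matrix.isHermitian_mul_mul_conjTranspose U h

lemma unitaryDiag_posSemidef (U : Matrix n n ℂ) {d : n → ℝ} (hd : ∀ i, 0 ≤ d i) :
    (unitaryDiag U d).PosSemidef := by
  have h : (Matrix.diagonal (fun i => (d i : ℂ))).PosSemidef := by
    rw [Matrix.posSemidef_diagonal_iff]
    intro i
    exact_mod_cast hd i
  exact h.mul_mul_conjTranspose_same U

lemma unitaryDiag_mul {U : Matrix n n ℂ} (hU : star U * U = 1) (c d : n → ℝ) :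
    unitaryDiag U c * unitaryDiag U d = unitaryDiag U (fun i => c i * d i) := by
  unfold unitaryDiag
  calc _ = U * Matrix.diagonal (fun i => (c i : ℂ)) * (star U * U) *
        Matrix.diagonal (fun i => (d i : ℂ)) * star U := by simp only [Matrix.mul_assoc]
    _ = _ := by
      rw [hU, Matrix.mul_one, Matrix.mul_assoc U, Matrix.diagonal_mul_diagonal]
      simp

lemma unitaryDiag_one {U : Matrix n n ℂ} (hU : star U * U = 1) :
    unitaryDiag U (fun _ => 1) = 1 := by
  simp [unitaryDiag, mul_eq_one_comm.mp hU]

/-- Two diagonalizations of the same matrix give the same functional calculus: the change of basis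
`W = U* V` satisfies `c i * W i j = W i j * d j`, so `c i = d j` wherever `W i j ≠ 0`. -/
lemma unitaryDiag_map_eq {U V : Matrix n n ℂ} (hU : star U * U = 1) (hV : star V * V = 1)
    {c d : n → ℝ} (h : unitaryDiag U c = unitaryDiag V d) (f : ℝ → ℝ) :
    unitaryDiag U (fun i => f (c i)) = unitaryDiag V (fun i => f (d i)) := by
  have hU' := mul_eq_one_comm.mp hU
  have hV' := mul_eq_one_comm.mp hV
  have conj : ∀ a b : n → ℝ, unitaryDiag U a = unitaryDiag V b ↔
      Matrix.diagonal (fun i => (a i : ℂ)) * (star U * V) =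
        (star U * V) * Matrix.diagonal (fun i => (b i : ℂ)) := by
    intro a b
    unfold unitaryDiag
    constructor
    · intro e
      calc _ = (star U * U) * Matrix.diagonal (fun i => (a i : ℂ)) * (star U * V) := by
            rw [hU, Matrix.one_mul]
        _ = star U * (U * Matrix.diagonal (fun i => (a i : ℂ)) * star U) * V := by
            simp only [Matrix.mul_assoc]
        _ = (star U * V) * Matrix.diagonal (fun i => (b i : ℂ)) * (star V * V) := by
            rw [e]; simp only [Matrix.mul_assoc]
        _ = _ := by rw [hV, Matrix.mul_one]
    · intro e
      calc _ = U * Matrix.diagonal (fun i => (a i : ℂ)) * star U * (V * star V) := by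
            rw [hV', Matrix.mul_one]
        _ = U * (Matrix.diagonal (fun i => (a i : ℂ)) * (star U * V)) * star V := by
            simp only [Matrix.mul_assoc]
        _ = (U * star U) * (V * Matrix.diagonal (fun i => (b i : ℂ)) * star V) := by
            rw [e]; simp only [Matrix.mul_assoc]
        _ = _ := by rw [hU', Matrix.one_mul]
  rw [conj] at h ⊢
  ext i j
  have hij := congrFun (congrFun h i) j
  rw [Matrix.diagonal_mul, Matrix.mul_diagonal] at hij ⊢
  by_cases hw : (star U * V) i j = 0
  · simp [hw]
  · have : c i = d j := by
      rw [mul_comm] at hij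
      exact_mod_cast mul_left_cancel₀ hw hij
    rw [this, mul_comm]

lemma isHermitian_eq_unitaryDiag {A : Matrix n n ℂ} (hA : A.IsHermitian) :
    A = unitaryDiag (hA.eigenvectorUnitary : Matrix n n ℂ) hA.eigenvalues := by
  conv_lhs => rw [hA.spectral_theorem]
  simp [unitaryDiag, Unitary.conjStarAlgAut_apply, Function.comp_def]

lemma star_eigenvectorUnitary_mul {A : Matrix n n ℂ} (hA : A.IsHermitian) :
    star (hA.eigenvectorUnitary : Matrix n n ℂ) * (hA.eigenvectorUnitary : Matrix n n ℂ) = 1 :=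
  Unitary.coe_star_mul_self _

/-- Matrix powers can be computed from an arbitrary unitary diagonalization. -/
lemma mpow_unitaryDiag {U : Matrix n n ℂ} (hU : star U * U = 1) (d : n → ℝ) (r : ℝ) :
    mpow (unitaryDiag U d) r = unitaryDiag U (fun i => d i ^ r) := by
  have hA := unitaryDiag_isHermitian U d
  rw [mpow, dif_pos hA]
  exact unitaryDiag_map_eq (star_eigenvectorUnitary_mul hA) hU
    (isHermitian_eq_unitaryDiag hA).symm (fun x => x ^ r)

lemma posSemidef_exists_unitaryDiag {A : Matrix n n ℂ} (hA : A.PosSemidef) :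
    ∃ (U : Matrix n n ℂ) (d : n → ℝ), star U * U = 1 ∧ (∀ i, 0 ≤ d i) ∧ A = unitaryDiag U d :=
  ⟨_, _, star_eigenvectorUnitary_mul hA.isHermitian, hA.eigenvalues_nonneg,
    isHermitian_eq_unitaryDiag hA.isHermitian⟩

lemma mpow_posSemidef {A : Matrix n n ℂ} (hA : A.PosSemidef) (r : ℝ) :
    (mpow A r).PosSemidef := by
  obtain ⟨U, d, hU, hd, rfl⟩ := posSemidef_exists_unitaryDiag hA
  rw [mpow_unitaryDiag hU]
  exact unitaryDiag_posSemidef U fun i => Real.rpow_nonneg (hd i) r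

lemma mul_mul_mpow_posSemidef {A B : Matrix n n ℂ} (hA : A.PosSemidef) (hB : B.PosSemidef)
    (r : ℝ) : (mpow A r * B * mpow A r).PosSemidef := by
  have h := hB.mul_mul_conjTranspose_same (mpow A r)
  rwa [(mpow_posSemidef hA r).isHermitian.eq] at h

lemma msharp_posSemidef {A B : Matrix n n ℂ} (hA : A.PosSemidef) (hB : B.PosSemidef) :
    (msharp A B).PosSemidef :=
  mul_mul_mpow_posSemidef hA (mpow_posSemidef (mul_mul_mpow_posSemidef hA hB _) _) _

lemma unitaryDiag_kronecker (U : Matrix n n ℂ) (V : Matrix m m ℂ) (c : n → ℝ) (d : m → ℝ) :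
    unitaryDiag U c ⊗ₖ unitaryDiag V d =
      unitaryDiag (U ⊗ₖ V) (fun p => c p.1 * d p.2) := by
  simp only [unitaryDiag, Matrix.mul_kronecker_mul, Matrix.star_eq_conjTranspose,
    Matrix.conjTranspose_kronecker, Matrix.diagonal_kronecker_diagonal, Complex.ofReal_mul]

lemma mpow_kronecker {A : Matrix n n ℂ} {B : Matrix m m ℂ} (hA : A.PosSemidef)
    (hB : B.PosSemidef) (r : ℝ) : mpow (A ⊗ₖ B) r = mpow A r ⊗ₖ mpow B r := by
  obtain ⟨U, c, hU, hc, rfl⟩ := posSemidef_exists_unitaryDiag hA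
  obtain ⟨V, d, hV, hd, rfl⟩ := posSemidef_exists_unitaryDiag hB
  have hUV : star (U ⊗ₖ V) * (U ⊗ₖ V) = 1 := by
    rw [Matrix.star_eq_conjTranspose, Matrix.conjTranspose_kronecker, ← Matrix.mul_kronecker_mul,
      ← Matrix.star_eq_conjTranspose, ← Matrix.star_eq_conjTranspose, hU, hV,
      Matrix.one_kronecker_one]
  rw [unitaryDiag_kronecker, mpow_unitaryDiag hUV, mpow_unitaryDiag hU, mpow_unitaryDiag hV,
    unitaryDiag_kronecker]
  congr 1
  ext p
  exact Real.mul_rpow (hc _) (hd _)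

lemma msharp_kronecker {A B : Matrix n n ℂ} {C D : Matrix m m ℂ} (hA : A.PosSemidef)
    (hB : B.PosSemidef) (hC : C.PosSemidef) (hD : D.PosSemidef) :
    msharp (A ⊗ₖ C) (B ⊗ₖ D) = msharp A B ⊗ₖ msharp C D := by
  simp only [msharp]
  rw [mpow_kronecker hA hC, mpow_kronecker hA hC, ← Matrix.mul_kronecker_mul,
    ← Matrix.mul_kronecker_mul,
    mpow_kronecker (mul_mul_mpow_posSemidef hA hB _) (mul_mul_mpow_posSemidef hC hD _),
    ← Matrix.mul_kronecker_mul, ← Matrix.mul_kronecker_mul]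

lemma mpow_one_left (r : ℝ) : mpow (1 : Matrix n n ℂ) r = 1 := by
  have h1 : star (1 : Matrix n n ℂ) * 1 = 1 := by simp
  rw [← unitaryDiag_one h1, mpow_unitaryDiag h1]
  simp

lemma msharp_inv_self {A : Matrix n n ℂ} (hA : A.PosDef) : msharp A⁻¹ A = 1 := by
  have hU := star_eigenvectorUnitary_mul hA.isHermitian
  have hpos := hA.eigenvalues_pos
  have hAd := isHermitian_eq_unitaryDiag hA.isHermitian
  generalize (hA.isHermitian.eigenvectorUnitary : Matrix n n ℂ) = U at hU hAd
  generalize hA.isHermitian.eigenvalues = d at hpos hAd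
  clear hA
  subst hAd
  have hinv : (unitaryDiag U d)⁻¹ = unitaryDiag U (fun i => (d i)⁻¹) := by
    apply Matrix.inv_eq_right_inv
    rw [unitaryDiag_mul hU, ← unitaryDiag_one hU]
    congr 1
    ext i
    exact mul_inv_cancel₀ (hpos i).ne'
  rw [hinv, msharp]
  simp only [mpow_unitaryDiag hU, unitaryDiag_mul hU]
  rw [← unitaryDiag_one hU]
  congr 1
  ext i
  -- With `x = d i`, the middle factor is `(x ^ (1/2) * x * x ^ (1/2)) ^ (1/2) = x`.
  have hx := hpos i
  have h2 : d i ^ (1 / 2 : ℝ) * d i ^ (1 / 2 : ℝ) = d i := by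
    rw [← Real.rpow_add hx]; norm_num
  have h3 : d i ^ (1 / 2 : ℝ) * d i * d i ^ (1 / 2 : ℝ) = d i * d i := by
    rw [mul_right_comm, h2]
  rw [Real.rpow_neg (inv_nonneg.mpr hx.le), Real.inv_rpow hx.le, inv_inv, h3,
    Real.mul_rpow hx.le hx.le, h2, mul_right_comm, ← mul_inv, h2, inv_mul_cancel₀ hx.ne']

end

open Kronecker in
/-- Tensor stabilization: `F_t^spec(ρ ⊗ τ, σ ⊗ τ) = F_t^spec(ρ,σ)`. -/
theorem specFid_tensor_stabilization {n m : Type*} [Fintype n] [DecidableEq n]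
    [Fintype m] [DecidableEq m]
    (ρ σ : Matrix n n ℂ) (τ : Matrix m m ℂ)
    (hρ : ρ.PosDef) (hσ : σ.PosDef) (hτ : τ.PosDef)
    (hρ1 : ρ.trace = 1) (hσ1 : σ.trace = 1) (hτ1 : τ.trace = 1)
    (t : ℝ) (ht : t ∈ Set.Icc (0 : ℝ) 1) :
    specFid t (ρ ⊗ₖ τ) (σ ⊗ₖ τ) = specFid t ρ σ := by
  have hρi := hρ.inv.posSemidef
  have hM := msharp_posSemidef hρi hσ.posSemidef
  rw [specFid, Matrix.inv_kronecker,
    msharp_kronecker hρi hσ.posSemidef hτ.inv.posSemidef hτ.posSemidef, msharp_inv_self hτ,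
    mpow_kronecker hM Matrix.PosSemidef.one, mpow_one_left, ← Matrix.mul_kronecker_mul,
    Matrix.mul_one, Matrix.trace_kronecker, hτ1, mul_one, specFid]
end
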